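/- arXiv:2108.13849 — 2 statements merged into one kernel-verified Lean document; each statement's English description precedes it below -/
import Mathlib

section
/- The set {x^n y^r g^m ζ^k u^i v^j : n, r, k, i, j ∈ ℕ, m ∈ ℤ} (where g^m denotes (g⁻¹)^{-m} when m < 0) is a basis of D as a k-vector space. -/
open FreeAlgebra

/-- Generators of the double of the Jordan plane. -/
inductive JGen : Type
  | u | v | zeta | g | ginv | x | y

variable (k : Type) [Field k] [IsAlgClosed k] [CharZero k]

/-- The defining relations of the double of the Jordan plane. -/
inductive JRel : FreeAlgebra k JGen → FreeAlgebra k JGen → Prop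
  | gginv : JRel (ι k .g * ι k .ginv) 1
  | ginvg : JRel (ι k .ginv * ι k .g) 1
  | zg : JRel (ι k .zeta * ι k .g) (ι k .g * ι k .zeta)
  | gx : JRel (ι k .g * ι k .x) (ι k .x * ι k .g)
  | gy : JRel (ι k .g * ι k .y) (ι k .y * ι k .g + ι k .x * ι k .g)
  | zy : JRel (ι k .zeta * ι k .y) (ι k .y * ι k .zeta + ι k .y)
  | zx : JRel (ι k .zeta * ι k .x) (ι k .x * ι k .zeta + ι k .x)
  | ug : JRel (ι k .u * ι k .g) (ι k .g * ι k .u)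
  | vg : JRel (ι k .v * ι k .g) (ι k .g * ι k .v + ι k .g * ι k .u)
  | vz : JRel (ι k .v * ι k .zeta) (ι k .zeta * ι k .v + ι k .v)
  | uz : JRel (ι k .u * ι k .zeta) (ι k .zeta * ι k .u + ι k .u)
  | yx : JRel (ι k .y * ι k .x) (ι k .x * ι k .y - (1/2 : k) • (ι k .x * ι k .x))
  | vu : JRel (ι k .v * ι k .u) (ι k .u * ι k .v - (1/2 : k) • (ι k .u * ι k .u))
  | ux : JRel (ι k .u * ι k .x) (ι k .x * ι k .u)
  | vx : JRel (ι k .v * ι k .x) (ι k .x * ι k .v + (1 - ι k .g) + ι k .x * ι k .u)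
  | uy : JRel (ι k .u * ι k .y) (ι k .y * ι k .u + (1 - ι k .g))
  | vy : JRel (ι k .v * ι k .y) (ι k .y * ι k .v - ι k .g * ι k .zeta + ι k .y * ι k .u)

/-- The double of the Jordan plane, as the presented algebra. -/
def D : Type := RingQuot (JRel k)

noncomputable instance : Ring (D k) := inferInstanceAs (Ring (RingQuot (JRel k)))
noncomputable instance : Algebra k (D k) := inferInstanceAs (Algebra k (RingQuot (JRel k)))

/-- The canonical projection from the free algebra onto `D`. -/
noncomputable def Dmk : FreeAlgebra k JGen →ₐ[k] D k := RingQuot.mkAlgHom k (JRel k)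

noncomputable def DU : D k := Dmk k (ι k .u)
noncomputable def DV : D k := Dmk k (ι k .v)
noncomputable def DZ : D k := Dmk k (ι k .zeta)
noncomputable def DG : D k := Dmk k (ι k .g)
noncomputable def DGinv : D k := Dmk k (ι k .ginv)
noncomputable def DX : D k := Dmk k (ι k .x)
noncomputable def DY : D k := Dmk k (ι k .y)

set_option synthInstance.maxHeartbeats 1000000
set_option maxHeartbeats 2000000

/-- `g^m` for `m : ℤ`, meaning `(g⁻¹)^(-m)` when `m < 0`. -/
noncomputable def gPow (m : ℤ) : D k := if 0 ≤ m then (DG k) ^ m.toNat else (DGinv k) ^ (-m).toNat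

/-- The PBW monomials `x^n y^r g^m ζ^k u^i v^j`. -/
noncomputable def pbwMonomial : ℕ × ℕ × ℤ × ℕ × ℕ × ℕ → D k :=
  fun p => (DX k) ^ p.1 * (DY k) ^ p.2.1 * gPow k p.2.2.1 * (DZ k) ^ p.2.2.2.1 *
    (DU k) ^ p.2.2.2.2.1 * (DV k) ^ p.2.2.2.2.2

/-!
Adjoining `x`, `y`, `g^±1`, `ζ`, `u`, `v` one after the other builds `D` by successive Ore-type
extensions: each new generator `a` satisfies `a b ∈ B a + B` for every `b` in the subalgebra `B`
generated by the previous ones. Hence each step multiplies a spanning set on the right by the powers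
of the new generator, and the monomials span.

For independence, let `D` act on the module induced from the character `ζ ↦ c` of the polynomial
algebra in `ζ`, where `c` is an indeterminate. Applied to the generator of this module, the monomial
`x^n y^r g^m ζ^l u^i v^j` gives `(c - i - j)^l` times a vector with a leading term, with respect to
the degree in `y`, that determines `(n, r, m, i, j)`. The leading terms separate the monomials up to
`l`, and for fixed `i` and `j` the polynomials `(c - i - j)^l` are linearly independent.
-/

section BlockTriangular

variable {ι κ δ R M N : Type*} [Ring R] [AddCommGroup M] [Module R M] [AddCommGroup N] [Module R N]

theorem linearIndependent_of_blockTriangular [LinearOrder δ] {v : ι → M} (block : ι → κ)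
    (deg : κ → δ) (φ : κ → M →ₗ[R] N)
    (hzero : ∀ p s, block p ≠ s → deg (block p) ≤ deg s → φ s (v p) = 0)
    (hblock : ∀ s, LinearIndepOn R (fun p => φ s (v p)) (block ⁻¹' {s})) :
    LinearIndependent R v := by
  classical
  rw [linearIndependent_iff]
  intro a ha
  by_contra hne
  obtain ⟨p, hp, hmax⟩ :=
    a.support.exists_max_image (fun q => deg (block q)) (Finsupp.support_nonempty_iff.2 hne)
  set s := block p
  have hsum : Finsupp.linearCombination R (fun q => φ s (v q)) (a.filter (block · = s)) = 0 := by
    rw [← map_zero (φ s), ← ha, Finsupp.apply_linearCombination,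
      Finsupp.linearCombination_apply, Finsupp.linearCombination_apply,
      Finsupp.sum_filter_index, Finsupp.support_filter, Finset.sum_filter]
    refine Finset.sum_congr rfl fun q hq => ?_
    split_ifs with hqs
    · rfl
    · exact ((congrArg (a q • ·) (hzero q s hqs (hmax q hq))).trans (smul_zero _)).symm
  have hfilter : a.filter (block · = s) = 0 :=
    linearIndepOn_iff.1 (hblock s) _ (fun q hq => by simp_all) hsum
  have hap : a p = 0 := by
    rw [← Finsupp.filter_apply_pos (block · = s) a rfl, hfilter, Finsupp.zero_apply]
  exact Finsupp.mem_support_iff.1 hp hap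

end BlockTriangular

theorem linearIndependent_X_sub_C_pow {R : Type*} [CommRing R] [IsDomain R] (a : R) :
    LinearIndependent R fun l : ℕ => (Polynomial.X - Polynomial.C a) ^ l :=
  Polynomial.Sequence.linearIndependent
    ⟨fun l => (Polynomial.X - Polynomial.C a) ^ l, fun l => by
      rw [Polynomial.degree_pow, Polynomial.degree_X_sub_C, nsmul_one]⟩

section OreExtension

open Algebra Subalgebra

variable {R A : Type*} [CommSemiring R] [Semiring A] [Algebra R A]

/-- `a * b ∈ B * a + B`: the commutation rule `a b = σ(b) a + δ(b)` of an Ore extension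
`B[a; σ, δ]`, for a single `b` and without asking for maps `σ` and `δ`. -/
def OreCommutes (B : Subalgebra R A) (a b : A) : Prop :=
  ∃ c ∈ B, ∃ d ∈ B, a * b = c * a + d

theorem OreCommutes.of_mem_adjoin {s : Set A} {a : A}
    (h : ∀ b ∈ s, OreCommutes (adjoin R s) a b) {b : A} (hb : b ∈ adjoin R s) :
    OreCommutes (adjoin R s) a b := by
  induction hb using adjoin_induction with
  | mem b hb => exact h b hb
  | algebraMap r => exact ⟨_, algebraMap_mem _ r, 0, zero_mem _, by rw [add_zero, commutes]⟩
  | add b b' _ _ ih ih' =>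
    obtain ⟨c, hc, d, hd, hab⟩ := ih
    obtain ⟨c', hc', d', hd', hab'⟩ := ih'
    exact ⟨_, add_mem hc hc', _, add_mem hd hd', by
      rw [mul_add, hab, hab', add_mul, add_add_add_comm]⟩
  | mul b b' _ hb' ih ih' =>
    obtain ⟨c, hc, d, hd, hab⟩ := ih
    obtain ⟨c', hc', d', hd', hab'⟩ := ih'
    refine ⟨_, mul_mem hc hc', _, add_mem (mul_mem hc hd') (mul_mem hd hb'), ?_⟩
    rw [← mul_assoc, hab, add_mul, mul_assoc, hab', mul_add, mul_assoc, add_assoc]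

theorem toSubmodule_adjoin_le_of_mul_mem {s : Set A} {N : Submodule R A} (one_mem : 1 ∈ N)
    (mul_mem : ∀ a ∈ s, ∀ n ∈ N, a * n ∈ N) : toSubmodule (adjoin R s) ≤ N := by
  suffices ∀ a ∈ adjoin R s, ∀ n ∈ N, a * n ∈ N from
    fun a ha => mul_one a ▸ this a ha 1 one_mem
  intro a ha
  induction ha using adjoin_induction with
  | mem a ha => exact mul_mem a ha
  | algebraMap r => exact fun n hn => Algebra.smul_def r n ▸ N.smul_mem r hn
  | add a b _ _ iha ihb => exact fun n hn => add_mul a b n ▸ add_mem (iha n hn) (ihb n hn)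
  | mul a b _ _ iha ihb => exact fun n hn => mul_assoc a b n ▸ iha _ (ihb n hn)

theorem toSubmodule_adjoin_union_le_mul {s t : Set A} {N P : Submodule R A}
    (hN : toSubmodule (adjoin R s) ≤ N) (one_mem : 1 ∈ P) (mul_mem_P : ∀ a ∈ t, ∀ p ∈ P, a * p ∈ P)
    (hore : ∀ a ∈ t, ∀ b ∈ s, OreCommutes (adjoin R s) a b) :
    toSubmodule (adjoin R (t ∪ s)) ≤ N * P := by
  suffices toSubmodule (adjoin R (t ∪ s)) ≤ toSubmodule (adjoin R s) * P from
    this.trans (by gcongr)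
  refine toSubmodule_adjoin_le_of_mul_mem ?_ fun a ha n hn => ?_
  · exact one_mul (1 : A) ▸ Submodule.mul_mem_mul (Subalgebra.one_mem _) one_mem
  induction hn using Submodule.mul_induction_on' with
  | add n _ n' _ ih ih' => exact mul_add a n n' ▸ add_mem ih ih'
  | mem_mul_mem b hb p hp =>
    rw [← mul_assoc]
    rcases ha with ha | ha
    · obtain ⟨c, hc, d, hd, hab⟩ := OreCommutes.of_mem_adjoin (hore a ha) hb
      rw [hab, add_mul, mul_assoc]
      exact add_mem (Submodule.mul_mem_mul hc (mul_mem_P a ha p hp)) (Submodule.mul_mem_mul hd hp)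
    · exact Submodule.mul_mem_mul (Subalgebra.mul_mem _ (subset_adjoin ha) hb) hp

theorem mul_mem_span_range {ι : Type*} {f : ι → A} {a : A} (σ : ι → ι)
    (hσ : ∀ n, a * f n = f (σ n)) :
    ∀ p ∈ Submodule.span R (Set.range f), a * p ∈ Submodule.span R (Set.range f) := by
  suffices h : Submodule.span R (Set.range f) ≤
      (Submodule.span R (Set.range f)).comap (LinearMap.mulLeft R a) from h
  rw [Submodule.span_le]
  rintro _ ⟨n, rfl⟩
  exact Submodule.subset_span ⟨σ n, (hσ n).symm⟩

/-- The span of the powers of `a`, that is, the image of `R[X]` under evaluation at `a`. -/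
def powerSpan (R : Type*) {A : Type*} [CommSemiring R] [Semiring A] [Algebra R A] (a : A) :
    Submodule R A :=
  Submodule.span R (Set.range fun n : ℕ => a ^ n)

theorem one_mem_powerSpan (a : A) : 1 ∈ powerSpan R a :=
  Submodule.subset_span ⟨0, pow_zero a⟩

theorem mul_mem_powerSpan (a : A) : ∀ p ∈ powerSpan R a, a * p ∈ powerSpan R a :=
  mul_mem_span_range (· + 1) fun n => (pow_succ' a n).symm

theorem toSubmodule_adjoin_singleton_le_powerSpan (a : A) :
    toSubmodule (adjoin R {a}) ≤ powerSpan R a :=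
  toSubmodule_adjoin_le_of_mul_mem (one_mem_powerSpan a) <| by
    rintro _ rfl
    exact mul_mem_powerSpan _

theorem toSubmodule_adjoin_insert_le_mul_powerSpan {s : Set A} {a : A} {N : Submodule R A}
    (hN : toSubmodule (adjoin R s) ≤ N) (hore : ∀ b ∈ s, OreCommutes (adjoin R s) a b) :
    toSubmodule (adjoin R (insert a s)) ≤ N * powerSpan R a := by
  rw [Set.insert_eq]
  refine toSubmodule_adjoin_union_le_mul hN (one_mem_powerSpan a) ?_ ?_ <;> rintro _ rfl
  exacts [mul_mem_powerSpan _, hore]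

end OreExtension

namespace JordanDouble

section Relations

variable (K : Type) [Field K]

theorem Dmk_eq_of_rel {a b : FreeAlgebra K JGen} (h : JRel K a b) : Dmk K a = Dmk K b :=
  RingQuot.mkAlgHom_rel K h

theorem g_mul_ginv : DG K * DGinv K = 1 := by
  simpa only [DG, DGinv, map_mul, map_one] using Dmk_eq_of_rel K .gginv

theorem ginv_mul_g : DGinv K * DG K = 1 := by
  simpa only [DGinv, DG, map_mul, map_one] using Dmk_eq_of_rel K .ginvg

theorem z_mul_g : DZ K * DG K = DG K * DZ K := by
  simpa only [DZ, DG, map_mul] using Dmk_eq_of_rel K .zg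

theorem g_mul_x : DG K * DX K = DX K * DG K := by
  simpa only [DG, DX, map_mul] using Dmk_eq_of_rel K .gx

theorem g_mul_y : DG K * DY K = DY K * DG K + DX K * DG K := by
  simpa only [DG, DY, DX, map_mul, map_add] using Dmk_eq_of_rel K .gy

theorem z_mul_y : DZ K * DY K = DY K * DZ K + DY K := by
  simpa only [DZ, DY, map_mul, map_add] using Dmk_eq_of_rel K .zy

theorem z_mul_x : DZ K * DX K = DX K * DZ K + DX K := by
  simpa only [DZ, DX, map_mul, map_add] using Dmk_eq_of_rel K .zx

theorem u_mul_g : DU K * DG K = DG K * DU K := by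
  simpa only [DU, DG, map_mul] using Dmk_eq_of_rel K .ug

theorem v_mul_g : DV K * DG K = DG K * DV K + DG K * DU K := by
  simpa only [DV, DG, DU, map_mul, map_add] using Dmk_eq_of_rel K .vg

theorem v_mul_z : DV K * DZ K = DZ K * DV K + DV K := by
  simpa only [DV, DZ, map_mul, map_add] using Dmk_eq_of_rel K .vz

theorem u_mul_z : DU K * DZ K = DZ K * DU K + DU K := by
  simpa only [DU, DZ, map_mul, map_add] using Dmk_eq_of_rel K .uz

theorem y_mul_x : DY K * DX K = DX K * DY K - (1 / 2 : K) • (DX K * DX K) := by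
  simpa only [DY, DX, map_mul, map_sub, map_smul] using Dmk_eq_of_rel K .yx

theorem v_mul_u : DV K * DU K = DU K * DV K - (1 / 2 : K) • (DU K * DU K) := by
  simpa only [DV, DU, map_mul, map_sub, map_smul] using Dmk_eq_of_rel K .vu

theorem u_mul_x : DU K * DX K = DX K * DU K := by
  simpa only [DU, DX, map_mul] using Dmk_eq_of_rel K .ux

theorem v_mul_x : DV K * DX K = DX K * DV K + (1 - DG K) + DX K * DU K := by
  simpa only [DV, DX, DG, DU, map_mul, map_add, map_sub, map_one] using Dmk_eq_of_rel K .vx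

theorem u_mul_y : DU K * DY K = DY K * DU K + (1 - DG K) := by
  simpa only [DU, DY, DG, map_mul, map_add, map_sub, map_one] using Dmk_eq_of_rel K .uy

theorem v_mul_y : DV K * DY K = DY K * DV K - DG K * DZ K + DY K * DU K := by
  simpa only [DV, DY, DG, DZ, DU, map_mul, map_add, map_sub] using Dmk_eq_of_rel K .vy

/-- The generator `g` as a unit of `D`, giving access to the library's integer powers. -/
noncomputable def gUnit : (D K)ˣ := ⟨DG K, DGinv K, g_mul_ginv K, ginv_mul_g K⟩

theorem ginv_mul_x : DGinv K * DX K = DX K * DGinv K :=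
  SemiconjBy.units_inv_symm_left (a := gUnit K) (g_mul_x K)

theorem ginv_mul_y : DGinv K * DY K = (DY K - DX K) * DGinv K := by
  have g_conj_y : SemiconjBy (gUnit K : D K) (DY K) (DY K + DX K) :=
    (g_mul_y K).trans (add_mul _ _ _).symm
  have h : DGinv K * (DY K + DX K) = DY K * DGinv K := g_conj_y.units_inv_symm_left
  rw [sub_mul, ← h, mul_add, ginv_mul_x, add_sub_cancel_right]

theorem z_mul_ginv : DZ K * DGinv K = DGinv K * DZ K :=
  Commute.units_inv_right (u := gUnit K) (z_mul_g K)

theorem u_mul_ginv : DU K * DGinv K = DGinv K * DU K :=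
  Commute.units_inv_right (u := gUnit K) (u_mul_g K)

theorem v_mul_ginv : DV K * DGinv K = DGinv K * DV K - DGinv K * DU K := by
  have g_conj_v : SemiconjBy (gUnit K : D K) (DV K + DU K) (DV K) :=
    (mul_add _ _ _).trans (v_mul_g K).symm
  have h : DGinv K * DV K = (DV K + DU K) * DGinv K := g_conj_v.units_inv_symm_left
  rw [h, add_mul, u_mul_ginv, add_sub_cancel_right]

theorem gPow_eq_zpow (m : ℤ) : gPow K m = ↑(gUnit K ^ m) := by
  unfold gPow
  split_ifs with hm
  · lift m to ℕ using hm
    rw [Int.toNat_natCast, zpow_natCast, Units.val_pow_eq_pow_val, gUnit]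
  · obtain ⟨n, rfl⟩ := Int.exists_eq_neg_ofNat (le_of_not_ge hm)
    rw [neg_neg, Int.toNat_natCast, zpow_neg, zpow_natCast, ← inv_pow,
      Units.val_pow_eq_pow_val, gUnit, Units.inv_mk]

theorem gPow_zero : gPow K 0 = 1 := by
  rw [gPow_eq_zpow, zpow_zero, Units.val_one]

theorem g_mul_gPow (m : ℤ) : DG K * gPow K m = gPow K (m + 1) := by
  rw [gPow_eq_zpow, gPow_eq_zpow, add_comm, zpow_one_add, Units.val_mul, gUnit]

theorem ginv_mul_gPow (m : ℤ) : DGinv K * gPow K m = gPow K (m - 1) := by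
  rw [← sub_add_cancel m 1, ← g_mul_gPow, ← mul_assoc, ginv_mul_g, one_mul, add_sub_cancel_right]

end Relations

section Spanning

open Algebra Subalgebra

variable (K : Type) [Field K]

theorem adjoin_generators_eq_top :
    adjoin K {DV K, DU K, DZ K, DG K, DGinv K, DY K, DX K} = ⊤ := by
  have hmk : Function.Surjective (Dmk K) := RingQuot.mkAlgHom_surjective K (JRel K)
  rw [_root_.eq_top_iff, ← (AlgHom.range_eq_top _).2 hmk, ← Algebra.map_top,
    ← FreeAlgebra.adjoin_range_ι, AlgHom.map_adjoin, ← Set.range_comp]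
  refine adjoin_mono ?_
  rintro _ ⟨a, rfl⟩
  cases a <;> simp [DU, DV, DZ, DG, DGinv, DX, DY]

theorem adjoin_y_x_le :
    toSubmodule (adjoin K {DY K, DX K}) ≤ powerSpan K (DX K) * powerSpan K (DY K) := by
  refine toSubmodule_adjoin_insert_le_mul_powerSpan
    (toSubmodule_adjoin_singleton_le_powerSpan _) ?_
  have hx : DX K ∈ adjoin K {DX K} := subset_adjoin rfl
  rintro _ rfl
  exact ⟨_, hx, _, neg_mem (smul_mem _ (mul_mem hx hx) _), by rw [y_mul_x, sub_eq_add_neg]⟩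

theorem adjoin_g_ginv_y_x_le :
    toSubmodule (adjoin K {DG K, DGinv K, DY K, DX K}) ≤
      powerSpan K (DX K) * powerSpan K (DY K) * Submodule.span K (Set.range (gPow K)) := by
  have hy : DY K ∈ adjoin K {DY K, DX K} := subset_adjoin (by simp)
  have hx : DX K ∈ adjoin K {DY K, DX K} := subset_adjoin (by simp)
  have hset : ({DG K, DGinv K, DY K, DX K} : Set (D K)) = {DG K, DGinv K} ∪ {DY K, DX K} := by
    rw [Set.insert_union, Set.singleton_union]
  rw [hset]
  refine toSubmodule_adjoin_union_le_mul (adjoin_y_x_le K)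
    (Submodule.subset_span ⟨0, gPow_zero K⟩) ?_ ?_
  · rintro _ (rfl | rfl)
    exacts [mul_mem_span_range _ (g_mul_gPow K), mul_mem_span_range _ (ginv_mul_gPow K)]
  · rintro _ (rfl | rfl) _ (rfl | rfl)
    · exact ⟨_, add_mem hy hx, 0, zero_mem _, by rw [g_mul_y, add_mul, add_zero]⟩
    · exact ⟨_, hx, 0, zero_mem _, by rw [g_mul_x, add_zero]⟩
    · exact ⟨_, sub_mem hy hx, 0, zero_mem _, by rw [ginv_mul_y, add_zero]⟩
    · exact ⟨_, hx, 0, zero_mem _, by rw [ginv_mul_x, add_zero]⟩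

theorem oreCommutes_z :
    ∀ b ∈ ({DG K, DGinv K, DY K, DX K} : Set (D K)),
      OreCommutes (adjoin K {DG K, DGinv K, DY K, DX K}) (DZ K) b := by
  set B := adjoin K {DG K, DGinv K, DY K, DX K}
  have hg : DG K ∈ B := subset_adjoin (by simp)
  have hginv : DGinv K ∈ B := subset_adjoin (by simp)
  have hy : DY K ∈ B := subset_adjoin (by simp)
  have hx : DX K ∈ B := subset_adjoin (by simp)
  rintro _ (rfl | rfl | rfl | rfl)
  · exact ⟨_, hg, 0, zero_mem _, by rw [z_mul_g, add_zero]⟩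
  · exact ⟨_, hginv, 0, zero_mem _, by rw [z_mul_ginv, add_zero]⟩
  · exact ⟨_, hy, _, hy, z_mul_y K⟩
  · exact ⟨_, hx, _, hx, z_mul_x K⟩

theorem oreCommutes_u :
    ∀ b ∈ ({DZ K, DG K, DGinv K, DY K, DX K} : Set (D K)),
      OreCommutes (adjoin K {DZ K, DG K, DGinv K, DY K, DX K}) (DU K) b := by
  set B := adjoin K {DZ K, DG K, DGinv K, DY K, DX K}
  have hz : DZ K ∈ B := subset_adjoin (by simp)
  have hg : DG K ∈ B := subset_adjoin (by simp)
  have hginv : DGinv K ∈ B := subset_adjoin (by simp)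
  have hy : DY K ∈ B := subset_adjoin (by simp)
  have hx : DX K ∈ B := subset_adjoin (by simp)
  rintro _ (rfl | rfl | rfl | rfl | rfl)
  · exact ⟨_, add_mem hz (one_mem _), 0, zero_mem _, by rw [u_mul_z, add_mul, one_mul, add_zero]⟩
  · exact ⟨_, hg, 0, zero_mem _, by rw [u_mul_g, add_zero]⟩
  · exact ⟨_, hginv, 0, zero_mem _, by rw [u_mul_ginv, add_zero]⟩
  · exact ⟨_, hy, _, sub_mem (one_mem _) hg, u_mul_y K⟩
  · exact ⟨_, hx, 0, zero_mem _, by rw [u_mul_x, add_zero]⟩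

theorem oreCommutes_v :
    ∀ b ∈ ({DU K, DZ K, DG K, DGinv K, DY K, DX K} : Set (D K)),
      OreCommutes (adjoin K {DU K, DZ K, DG K, DGinv K, DY K, DX K}) (DV K) b := by
  set B := adjoin K {DU K, DZ K, DG K, DGinv K, DY K, DX K}
  have hu : DU K ∈ B := subset_adjoin (by simp)
  have hz : DZ K ∈ B := subset_adjoin (by simp)
  have hg : DG K ∈ B := subset_adjoin (by simp)
  have hginv : DGinv K ∈ B := subset_adjoin (by simp)
  have hy : DY K ∈ B := subset_adjoin (by simp)
  have hx : DX K ∈ B := subset_adjoin (by simp)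
  rintro _ (rfl | rfl | rfl | rfl | rfl | rfl)
  · exact ⟨_, hu, _, neg_mem (smul_mem _ (mul_mem hu hu) _), by rw [v_mul_u, sub_eq_add_neg]⟩
  · exact ⟨_, add_mem hz (one_mem _), 0, zero_mem _, by rw [v_mul_z, add_mul, one_mul, add_zero]⟩
  · exact ⟨_, hg, _, mul_mem hg hu, v_mul_g K⟩
  · exact ⟨_, hginv, _, neg_mem (mul_mem hginv hu), by rw [v_mul_ginv, sub_eq_add_neg]⟩
  · exact ⟨_, hy, _, add_mem (neg_mem (mul_mem hg hz)) (mul_mem hy hu), by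
      rw [v_mul_y, sub_eq_add_neg, add_assoc]⟩
  · exact ⟨_, hx, _, add_mem (sub_mem (one_mem _) hg) (mul_mem hx hu), by
      rw [v_mul_x, add_assoc]⟩

theorem top_le_mul_powerSpan :
    ⊤ ≤ powerSpan K (DX K) * powerSpan K (DY K) * Submodule.span K (Set.range (gPow K)) *
      powerSpan K (DZ K) * powerSpan K (DU K) * powerSpan K (DV K) := by
  have adjoin_z_le :=
    toSubmodule_adjoin_insert_le_mul_powerSpan (adjoin_g_ginv_y_x_le K) (oreCommutes_z K)
  have adjoin_u_le := toSubmodule_adjoin_insert_le_mul_powerSpan adjoin_z_le (oreCommutes_u K)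
  have adjoin_v_le := toSubmodule_adjoin_insert_le_mul_powerSpan adjoin_u_le (oreCommutes_v K)
  rwa [adjoin_generators_eq_top, Algebra.top_toSubmodule] at adjoin_v_le

theorem span_pbwMonomial_eq_top : Submodule.span K (Set.range (pbwMonomial K)) = ⊤ := by
  refine top_le_iff.1 ((top_le_mul_powerSpan K).trans ?_)
  simp only [powerSpan, Submodule.span_mul_span]
  refine Submodule.span_mono ?_
  rintro _ ⟨_, ⟨_, ⟨_, ⟨_, ⟨_, ⟨n, rfl⟩, _, ⟨r, rfl⟩, rfl⟩, _, ⟨m, rfl⟩, rfl⟩, _, ⟨l, rfl⟩, rfl⟩,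
    _, ⟨i, rfl⟩, rfl⟩, _, ⟨j, rfl⟩, rfl⟩
  exact ⟨(n, r, m, l, i, j), rfl⟩

end Spanning

section Operators

/-- Formal sums `∑ f (n, r, m, i, j) u^i x^n g^m Y^r v^j`, where `Y` stands for `y g⁻¹`. In this
basis left multiplication by the generators of `D` takes its simplest form. Negative exponents are
allowed, so that multiplication by a monomial is a translation of the index set. -/
abbrev FormalSum (R : Type*) : Type _ := ℤ × ℤ × ℤ × ℤ × ℤ → R

variable {R : Type*} [CommRing R]

/-- Multiplication by the monomial with exponent vector `e`. -/
def shift (R : Type*) [CommRing R] (e : ℤ × ℤ × ℤ × ℤ × ℤ) : Module.End R (FormalSum R) :=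
  LinearMap.funLeft R R (· - e)

/-- The operator `c + x∂_x + Y∂_Y - u∂_u - v∂_v`, by which `ζ` acts. -/
def zOp (c : R) : Module.End R (FormalSum R) where
  toFun f := fun (n, r, m, i, j) => (c + n + r - i - j) * f (n, r, m, i, j)
  map_add' _ _ := funext fun _ => mul_add _ _ _
  map_smul' _ _ := funext fun _ => mul_left_comm _ _ _

/-- The operator `g Y - x (h x∂_x + g∂_g + 1) + (g - 1) ∂_u`, by which `y = g Y - x` acts when
`h = 1/2`. -/
def yOp (h : R) : Module.End R (FormalSum R) where
  toFun f := fun (n, r, m, i, j) =>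
    f (n, r - 1, m - 1, i, j) - (h * (n - 1) + m + 1) * f (n - 1, r, m, i, j) +
      (i + 1) * (f (n, r, m - 1, i + 1, j) - f (n, r, m, i + 1, j))
  map_add' _ _ := by ext; simp only [Pi.add_apply]; ring
  map_smul' _ _ := by ext; simp only [Pi.smul_apply, smul_eq_mul, RingHom.id_apply]; ring

/-- The operator `v + u (x∂_x - h u∂_u + g∂_g) + (1 - g) ∂_x - (c + h Y∂_Y - v∂_v) ∂_Y`, by which
`v` acts when `h = 1/2`. The last term comes from `v Y = Y v - ζ`. -/
def vOp (h c : R) : Module.End R (FormalSum R) where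
  toFun f := fun (n, r, m, i, j) =>
    f (n, r, m, i, j - 1) + (n - h * (i - 1) + m) * f (n, r, m, i - 1, j) +
      (n + 1) * (f (n + 1, r, m, i, j) - f (n + 1, r, m - 1, i, j)) -
      (r + 1) * (c + h * r - j) * f (n, r + 1, m, i, j)
  map_add' _ _ := by ext; simp only [Pi.add_apply]; ring
  map_smul' _ _ := by ext; simp only [Pi.smul_apply, smul_eq_mul, RingHom.id_apply]; ring

variable (h c : R) (f : FormalSum R) (n r m i j : ℤ)

theorem shift_apply (e s : ℤ × ℤ × ℤ × ℤ × ℤ) : shift R e f s = f (s - e) := rfl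

theorem zOp_apply : zOp c f (n, r, m, i, j) = (c + n + r - i - j) * f (n, r, m, i, j) := rfl

theorem yOp_apply : yOp h f (n, r, m, i, j) =
    f (n, r - 1, m - 1, i, j) - (h * (n - 1) + m + 1) * f (n - 1, r, m, i, j) +
      (i + 1) * (f (n, r, m - 1, i + 1, j) - f (n, r, m, i + 1, j)) := rfl

theorem vOp_apply : vOp h c f (n, r, m, i, j) =
    f (n, r, m, i, j - 1) + (n - h * (i - 1) + m) * f (n, r, m, i - 1, j) +
      (n + 1) * (f (n + 1, r, m, i, j) - f (n + 1, r, m - 1, i, j)) -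
      (r + 1) * (c + h * r - j) * f (n, r + 1, m, i, j) := rfl

theorem shift_zero : shift R 0 = 1 :=
  LinearMap.ext fun f => funext fun s => congrArg f (sub_zero s)

theorem shift_mul (d e : ℤ × ℤ × ℤ × ℤ × ℤ) : shift R d * shift R e = shift R (d + e) :=
  LinearMap.ext fun f => funext fun s => congrArg f (sub_sub s d e)

theorem shift_pow (e : ℤ × ℤ × ℤ × ℤ × ℤ) (k : ℕ) : shift R e ^ k = shift R (k • e) := by
  induction k with
  | zero => rw [pow_zero, zero_smul, shift_zero]
  | succ k ih => rw [pow_succ, ih, shift_mul, succ_nsmul]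

theorem shift_single (e s : ℤ × ℤ × ℤ × ℤ × ℤ) (a : R) :
    shift R e (Pi.single s a) = Pi.single (s + e) a := by
  ext t
  simp only [shift_apply, Pi.single_apply, sub_eq_iff_eq_add]

theorem zOp_single (s : ℤ × ℤ × ℤ × ℤ × ℤ) (a : R) :
    zOp c (Pi.single s a) =
      (c + s.1 + s.2.1 - s.2.2.2.1 - s.2.2.2.2 : R) • Pi.single s a := by
  ext ⟨n, r, m, i, j⟩
  rw [zOp_apply, Pi.smul_apply, smul_eq_mul]
  obtain rfl | hs := eq_or_ne (n, r, m, i, j) s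
  · rfl
  · rw [Pi.single_eq_of_ne hs, mul_zero, mul_zero]

theorem zOp_pow_single (i j : ℤ) (l : ℕ) :
    (zOp c ^ l) (Pi.single (0, 0, 0, i, j) 1) =
      (c - i - j) ^ l • (Pi.single (0, 0, 0, i, j) 1 : FormalSum R) := by
  induction l with
  | zero => rw [pow_zero, pow_zero, one_smul, Module.End.one_apply]
  | succ l ih =>
    rw [pow_succ', Module.End.mul_apply, ih, map_smul, zOp_single, smul_smul, pow_succ]
    simp only [Int.cast_zero, add_zero]

theorem vOp_single :
    vOp h c (Pi.single (0, 0, 0, 0, j) 1) = Pi.single (0, 0, 0, 0, j + 1) 1 := by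
  ext ⟨n, r, m, i, j'⟩
  have x_deriv (m : ℤ) :
      (n + 1) * (Pi.single (0, 0, 0, 0, j) 1 : FormalSum R) (n + 1, r, m, i, j') = 0 := by
    rw [Pi.single_apply, mul_ite, mul_one, mul_zero, ite_eq_right_iff]
    intro hs
    exact_mod_cast congrArg (Int.cast (R := R)) (Prod.mk.inj hs).1
  have y_deriv :
      (r + 1) * (Pi.single (0, 0, 0, 0, j) 1 : FormalSum R) (n, r + 1, m, i, j') = 0 := by
    rw [Pi.single_apply, mul_ite, mul_one, mul_zero, ite_eq_right_iff]
    intro hs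
    exact_mod_cast congrArg (Int.cast (R := R)) (Prod.mk.inj (Prod.mk.inj hs).2).1
  have u_term : (n - h * (i - 1) + m) *
      (Pi.single (0, 0, 0, 0, j) 1 : FormalSum R) (n, r, m, i - 1, j') = 0 := by
    rw [Pi.single_apply, mul_ite, mul_one, mul_zero, ite_eq_right_iff]
    simp only [Prod.mk.injEq, sub_eq_zero]
    rintro ⟨rfl, -, rfl, rfl, -⟩
    simp only [Int.cast_zero, Int.cast_one, sub_self, mul_zero, add_zero]
  rw [vOp_apply, u_term, mul_sub, x_deriv, x_deriv, mul_right_comm, y_deriv]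
  simp only [zero_mul, add_zero, sub_zero, Pi.single_apply, Prod.mk.injEq, sub_eq_iff_eq_add]

theorem vOp_pow_single (k : ℕ) :
    (vOp h c ^ k) (Pi.single 0 1) = Pi.single (0, 0, 0, 0, (k : ℤ)) 1 := by
  induction k with
  | zero => rfl
  | succ k ih => rw [pow_succ', Module.End.mul_apply, ih, vOp_single, Nat.cast_succ]

theorem yOp_pow_single_apply_of_le {k : ℕ} (hk : k ≤ r) (m₀ i₀ j₀ : ℤ) :
    (yOp h ^ k) (Pi.single (0, 0, m₀, i₀, j₀) 1) (n, r, m, i, j) =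
      (Pi.single (0, (k : ℤ), m₀ + k, i₀, j₀) 1 : FormalSum R) (n, r, m, i, j) := by
  induction k generalizing n r m i j with
  | zero => simp
  | succ k ih =>
    rw [Nat.cast_succ] at hk
    rw [pow_succ', Module.End.mul_apply, yOp_apply, ih _ _ _ _ _ (by omega)]
    have vanish (n m i j : ℤ) :
        (yOp h ^ k) (Pi.single (0, 0, m₀, i₀, j₀) 1) (n, r, m, i, j) = 0 := by
      rw [ih _ _ _ _ _ (by omega)]
      exact Pi.single_eq_of_ne (by simp only [ne_eq, Prod.mk.injEq]; omega) 1
    simp only [vanish, sub_self, mul_zero, add_zero, sub_zero, Pi.single_apply, Prod.mk.injEq,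
      Nat.cast_succ, sub_eq_iff_eq_add, add_assoc]

theorem vOp_mul_yOp {h : R} (hh : 2 * h = 1) :
    vOp h c * yOp h =
      yOp h * vOp h c - shift R (0, 0, 1, 0, 0) * zOp c + yOp h * shift R (0, 0, 0, 1, 0) := by
  ext1 f
  ext ⟨n, r, m, i, j⟩
  simp only [Module.End.mul_apply, LinearMap.add_apply, LinearMap.sub_apply, Pi.add_apply,
    Pi.sub_apply, shift_apply, zOp_apply, yOp_apply, vOp_apply, Prod.mk_sub_mk, sub_zero]
  push_cast
  ring_nf
  linear_combination ((n + i) * (f (n, r, -1 + m, i, j) - f (n, r, m, i, j)) -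
    r * f (n, r, -1 + m, i, j)) * hh

end Operators

section Representation

variable {K : Type} [Field K] {R : Type*} [CommRing R] [Algebra K R]

/-- The operators by which the generators of `D` act on formal sums when `h = 1/2`: left
multiplication on the module induced from the character `ζ ↦ c` of the polynomial algebra in `ζ`. -/
def genOp (h c : R) : JGen → Module.End R (FormalSum R)
  | .u => shift R (0, 0, 0, 1, 0)
  | .v => vOp h c
  | .zeta => zOp c
  | .g => shift R (0, 0, 1, 0, 0)
  | .ginv => shift R (0, 0, -1, 0, 0)
  | .x => shift R (1, 0, 0, 0, 0)
  | .y => yOp h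

theorem lift_genOp_eq_of_rel [NeZero (2 : K)] (c : R) {a b : FreeAlgebra K JGen}
    (hab : JRel K a b) :
    FreeAlgebra.lift K (genOp (algebraMap K R (1 / 2)) c) a =
      FreeAlgebra.lift K (genOp (algebraMap K R (1 / 2)) c) b := by
  have two_mul_half : 2 * algebraMap K R (1 / 2) = 1 := by
    rw [← map_ofNat (algebraMap K R) 2, ← map_mul, mul_one_div_cancel two_ne_zero, map_one]
  cases hab <;>
    simp only [map_mul, map_add, map_sub, map_smul, map_one, FreeAlgebra.lift_ι_apply, genOp]
  case vy => exact vOp_mul_yOp c two_mul_half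
  all_goals
    refine LinearMap.ext fun f => funext fun (n, r, m, i, j) => ?_
    simp only [Module.End.mul_apply, LinearMap.add_apply, LinearMap.sub_apply, Pi.add_apply,
      LinearMap.smul_apply, Pi.smul_apply, Module.End.one_apply,
      Pi.sub_apply, shift_apply, zOp_apply, yOp_apply, vOp_apply, Prod.mk_sub_mk, sub_zero]
    try simp only [Algebra.smul_def]
    try push_cast
    try ring_nf

/-- The representation of `D` on formal sums determined by `genOp`. -/
noncomputable def rep (K : Type) [Field K] [NeZero (2 : K)] {R : Type*} [CommRing R] [Algebra K R]
    (c : R) : D K →ₐ[K] Module.End R (FormalSum R) :=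
  RingQuot.liftAlgHom K
    ⟨FreeAlgebra.lift K (genOp (algebraMap K R (1 / 2)) c), fun _ _ => lift_genOp_eq_of_rel c⟩

variable [NeZero (2 : K)] (c : R)

theorem rep_Dmk_ι (a : JGen) :
    rep K c (Dmk K (FreeAlgebra.ι K a)) = genOp (algebraMap K R (1 / 2)) c a :=
  (RingQuot.liftAlgHom_mkAlgHom_apply _ _ _ _).trans (FreeAlgebra.lift_ι_apply _ _)

theorem rep_gPow (m : ℤ) : rep K c (gPow K m) = shift R (0, 0, m, 0, 0) := by
  induction m with
  | zero => rw [gPow_zero, map_one, ← shift_zero]; rfl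
  | succ m ih =>
    rw [← g_mul_gPow, map_mul, ih, DG, rep_Dmk_ι, genOp, shift_mul]
    simp only [Prod.mk_add_mk, add_zero, add_comm]
  | pred m ih =>
    rw [← ginv_mul_gPow, map_mul, ih, DGinv, rep_Dmk_ι, genOp, shift_mul]
    simp only [Prod.mk_add_mk, add_zero, add_comm, sub_eq_add_neg]

theorem rep_pbwMonomial_single (n r : ℕ) (m : ℤ) (l i j : ℕ) :
    rep K c (pbwMonomial K (n, r, m, l, i, j)) (Pi.single 0 1) =
      (c - i - j) ^ l • shift R (n, 0, 0, 0, 0)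
        ((yOp (algebraMap K R (1 / 2)) ^ r) (Pi.single (0, 0, m, i, j) 1)) := by
  simp only [pbwMonomial, map_mul, map_pow, rep_gPow, Module.End.mul_apply]
  simp only [DX, DY, DZ, DU, DV, rep_Dmk_ι, genOp, vOp_pow_single, shift_pow, shift_single,
    Prod.smul_mk, Prod.mk_add_mk, nsmul_eq_mul, mul_zero, mul_one, add_zero, zero_add,
    zOp_pow_single, map_smul, Int.cast_natCast]

/-- The exponents `(n, r, m, i, j)` of the monomial `x^n y^r g^m ζ^l u^i v^j`. -/
def omitZ (p : ℕ × ℕ × ℤ × ℕ × ℕ × ℕ) : ℕ × ℕ × ℤ × ℕ × ℕ :=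
  (p.1, p.2.1, p.2.2.1, p.2.2.2.2)

/-- The coefficient of `u^i x^n g^(m + r) Y^r v^j` in `d • 1`, for `s = (n, r, m, i, j)`. The shift
by `r` selects the leading term of `x^n y^r g^m u^i v^j • 1`, since `y` acts as `g Y` plus terms
that do not raise the degree in `Y`. -/
noncomputable def vacuumCoeff (K : Type) [Field K] [NeZero (2 : K)] {R : Type*} [CommRing R]
    [Algebra K R] (c : R) (s : ℕ × ℕ × ℤ × ℕ × ℕ) : D K →ₗ[K] R where
  toFun d := rep K c d (Pi.single 0 1) (s.1, s.2.1, s.2.2.1 + s.2.1, s.2.2.2.1, s.2.2.2.2)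
  map_add' d d' := by rw [map_add, LinearMap.add_apply, Pi.add_apply]
  map_smul' a d := by rw [map_smul, LinearMap.smul_apply, Pi.smul_apply, RingHom.id_apply]

theorem vacuumCoeff_pbwMonomial_of_le {p : ℕ × ℕ × ℤ × ℕ × ℕ × ℕ} {s : ℕ × ℕ × ℤ × ℕ × ℕ}
    (hr : p.2.1 ≤ s.2.1) :
    vacuumCoeff K c s (pbwMonomial K p) =
      if omitZ p = s then (c - p.2.2.2.2.1 - p.2.2.2.2.2) ^ p.2.2.2.1 else 0 := by
  obtain ⟨n, r, m, l, i, j⟩ := p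
  obtain ⟨n', r', m', i', j'⟩ := s
  change rep K c _ _ _ = _
  simp only [rep_pbwMonomial_single, Pi.smul_apply, shift_apply, Prod.mk_sub_mk, sub_zero]
  rw [yOp_pow_single_apply_of_le _ _ _ _ _ _ (Nat.cast_le.2 hr), Pi.single_apply, smul_eq_mul,
    mul_ite, mul_one, mul_zero]
  refine if_congr ?_ rfl rfl
  simp only [omitZ, Prod.mk.injEq]
  omega

end Representation

section Independence

open Polynomial

variable (K : Type) [Field K] [NeZero (2 : K)]

theorem linearIndepOn_vacuumCoeff_pbwMonomial (s : ℕ × ℕ × ℤ × ℕ × ℕ) :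
    LinearIndepOn K (fun p => vacuumCoeff K (X : K[X]) s (pbwMonomial K p)) (omitZ ⁻¹' {s}) := by
  have injOn_zExponent : Set.InjOn (fun p => p.2.2.2.1) (omitZ ⁻¹' {s}) := by
    rintro ⟨n, r, m, l, i, j⟩ hp ⟨n', r', m', l', i', j'⟩ hp' hl
    simp only [omitZ, Set.mem_preimage, Set.mem_singleton_iff] at hp hp' hl
    simp only [← hp, Prod.mk.injEq] at hp' ⊢
    tauto
  have linearIndepOn_pow : LinearIndepOn K
      (fun p => (X - C (s.2.2.2.1 + s.2.2.2.2 : K)) ^ p.2.2.2.1) (omitZ ⁻¹' {s}) :=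
    (linearIndependent_X_sub_C_pow _).comp _ injOn_zExponent.injective
  refine linearIndepOn_pow.congr fun p hp => ?_
  obtain rfl : omitZ p = s := hp
  rw [vacuumCoeff_pbwMonomial_of_le X le_rfl, if_pos rfl]
  simp only [omitZ, map_add, map_natCast, sub_sub]

theorem linearIndependent_pbwMonomial : LinearIndependent K (pbwMonomial K) := by
  refine linearIndependent_of_blockTriangular omitZ (fun s => s.2.1) (vacuumCoeff K (X : K[X]))
    (fun p s hps hr => ?_) (linearIndepOn_vacuumCoeff_pbwMonomial K)
  rw [vacuumCoeff_pbwMonomial_of_le X hr, if_neg hps]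

end Independence

end JordanDouble

theorem pbw_basis_general (K : Type) [Field K] [NeZero (2 : K)] :
    LinearIndependent K (pbwMonomial K) ∧
      Submodule.span K (Set.range (pbwMonomial K)) = ⊤ :=
  ⟨JordanDouble.linearIndependent_pbwMonomial K, JordanDouble.span_pbwMonomial_eq_top K⟩

/-- the PBW monomials form a `k`-basis of `D`. -/
theorem pbw_basis :
    LinearIndependent k (pbwMonomial k) ∧
      Submodule.span k (Set.range (pbwMonomial k)) = ⊤ :=
  pbw_basis_general k
end

section
/- If b ≠ 0, then the induced module W_{a,b} is a simple D^{≥0}-module for every a ∈ k^×. -/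
open FreeAlgebra

variable (k : Type) [Field k] [IsAlgClosed k] [CharZero k]

set_option synthInstance.maxHeartbeats 1000000
set_option maxHeartbeats 2000000

/-- The subalgebra `D^{≥0}` of `D` generated by `g, g⁻¹, ζ, u, v`. -/
noncomputable def Dgeq : Subalgebra k (D k) :=
  Algebra.adjoin k {DG k, DGinv k, DZ k, DU k, DV k}

noncomputable def sG : Dgeq k := ⟨DG k, Algebra.subset_adjoin (by simp)⟩
noncomputable def sGinv : Dgeq k := ⟨DGinv k, Algebra.subset_adjoin (by simp)⟩
noncomputable def sZ : Dgeq k := ⟨DZ k, Algebra.subset_adjoin (by simp)⟩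
noncomputable def sU : Dgeq k := ⟨DU k, Algebra.subset_adjoin (by simp)⟩
noncomputable def sV : Dgeq k := ⟨DV k, Algebra.subset_adjoin (by simp)⟩

/-- The left ideal of `D^{≥0}` generated by `g - a`, `v - b` and `u`
(the annihilator of the generator `x_{a,b}` of the one-dimensional `H`-module `k_{a,b}`). -/
noncomputable def WIdeal (a b : k) : Submodule (Dgeq k) (Dgeq k) :=
  Submodule.span (Dgeq k)
    {sG k - algebraMap k (Dgeq k) a, sV k - algebraMap k (Dgeq k) b, sU k}

/-- The induced module `W_{a,b} = D^{≥0} ⊗_H k_{a,b}`, realized as the quotient of `D^{≥0}`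
by the left ideal `WIdeal a b`. -/
noncomputable abbrev Wmod (a b : k) : Type := (Dgeq k) ⧸ (WIdeal k a b)

/-- The class of `d ∈ D^{≥0}` in `W_{a,b}`; the class of `1` corresponds to `1 ⊗ x_{a,b}`. -/
noncomputable def wmk (a b : k) : Dgeq k → Wmod k a b := Submodule.Quotient.mk

/-!
Let `w` be the class of `1` in `W_{a,b}`. As `g`, `u`, `v` act on `w` by scalars and commute with
`ζ` up to a translation, every vector has the form `p(ζ) w` for a polynomial `p`, and
`v p(ζ) w = b p(ζ + 1) w`. If `b ≠ 0`, a nonzero submodule is therefore stable under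
`p(ζ) w ↦ (p(ζ + 1) - p(ζ)) w`, which lowers degrees until a nonzero multiple of `w` is reached.

That `w ≠ 0` is seen from a representation of `D` containing a nonzero vector on which `g`, `v`, `u`
act by `a`, `b`, `0`: it is found among the functionals on `D / (yD + ζD)`.
-/

section PolynomialTranslation

open Polynomial

theorem eq_C_of_taylor_eq_self {R : Type*} [CommRing R] [IsDomain R] [CharZero R] {r : R}
    (hr : r ≠ 0) {p : R[X]} (hp : taylor r p = p) : p = C (p.eval 0) := by
  have eval_multiple (n : ℕ) : p.eval (n * r) = p.eval 0 := by
    induction n with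
    | zero => simp
    | succ n ih => rw [← ih, Nat.cast_succ, add_one_mul, ← taylor_eval, hp]
  have multiples_injective : Function.Injective fun n : ℕ => (n : R) * r :=
    (mul_left_injective₀ hr).comp Nat.cast_injective
  refine eq_of_infinite_eval_eq _ _ ((Set.infinite_range_of_injective multiples_injective).mono ?_)
  rintro _ ⟨n, rfl⟩
  simp [eval_multiple]

theorem degree_taylor_sub_self_lt {R : Type*} [CommRing R] (r : R) {p : R[X]} (hp : p ≠ 0) :
    (taylor r p - p).degree < p.degree :=
  degree_sub_lt_right (degree_taylor p r) hp (leadingCoeff_taylor r p)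

theorem one_mem_of_taylor_mem {F : Type*} [Field F] [CharZero F] {r : F} (hr : r ≠ 0)
    {N : Submodule F F[X]} (hN : N ≠ ⊥) (h_taylor : ∀ p ∈ N, taylor r p ∈ N) : 1 ∈ N := by
  obtain ⟨p, hpN, hp⟩ := N.ne_bot_iff.mp hN
  induction p using degree_lt_wf.induction with
  | _ p ih =>
    by_cases h_const : taylor r p = p
    · rw [eq_C_of_taylor_eq_self hr h_const] at hpN hp
      have h_inv := N.smul_mem (p.eval 0)⁻¹ hpN
      rwa [smul_C, smul_eq_mul, inv_mul_cancel₀ (C_ne_zero.mp hp), C_1] at h_inv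
    · exact ih _ (degree_taylor_sub_self_lt r hp) (N.sub_mem (h_taylor p hpN) hpN)
        (sub_ne_zero.mpr h_const)

end PolynomialTranslation

section PolynomialOrbit

open Polynomial

variable {R A M : Type*} [CommSemiring R] [Semiring A] [Algebra R A]

theorem semiconjBy_aeval_taylor {s z : A} {r : R} (h : SemiconjBy s z (z + algebraMap R A r))
    (p : R[X]) : SemiconjBy s (aeval z p) (aeval z (taylor r p)) := by
  induction p using Polynomial.induction_on' with
  | add p q hp hq => simpa only [map_add] using hp.add_right hq
  | monomial n c =>
    have h_scalar : SemiconjBy s (algebraMap R A c) (algebraMap R A c) :=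
      (Algebra.commutes c s).symm
    simpa [taylor_monomial, aeval_monomial] using h_scalar.mul_right (h.pow_right n)

variable [AddCommMonoid M] [Module R M] [Module A M] [IsScalarTower R A M]

/-- The map `p ↦ p(z) • w`, whose range is the `R[z]`-submodule of `M` generated by `w`. -/
noncomputable def polynomialOrbit (z : A) (w : M) : R[X] →ₗ[R] M :=
  (LinearMap.toSpanSingleton A M w).restrictScalars R ∘ₗ (aeval z).toLinearMap

theorem polynomialOrbit_apply (z : A) (w : M) (p : R[X]) :
    polynomialOrbit z w p = aeval z p • w := rfl

theorem polynomialOrbit_one (z : A) (w : M) : polynomialOrbit z w (1 : R[X]) = w := by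
  rw [polynomialOrbit_apply, map_one, one_smul]

theorem smul_polynomialOrbit_self (z : A) (w : M) (p : R[X]) :
    z • polynomialOrbit z w p = polynomialOrbit z w (X * p) := by
  rw [polynomialOrbit_apply, polynomialOrbit_apply, map_mul, aeval_X, mul_smul]

theorem smul_polynomialOrbit {s z : A} {w : M} {r c : R}
    (h : SemiconjBy s z (z + algebraMap R A r)) (hw : s • w = c • w) (p : R[X]) :
    s • polynomialOrbit z w p = polynomialOrbit z w (c • taylor r p) := by
  rw [polynomialOrbit_apply, ← mul_smul, (semiconjBy_aeval_taylor h p).eq, mul_smul, hw,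
    smul_algebra_smul_comm, map_smul, polynomialOrbit_apply]

theorem eq_top_of_adjoin_eq_top {S : Set A} (hS : Algebra.adjoin R S = ⊤) {w : M}
    (hw : Submodule.span A {w} = ⊤) {P : Submodule R M} (hwP : w ∈ P)
    (hP : ∀ s ∈ S, ∀ m ∈ P, s • m ∈ P) : P = ⊤ := by
  have stable (d : A) : ∀ m ∈ P, d • m ∈ P := by
    have hd : d ∈ Algebra.adjoin R S := hS ▸ Algebra.mem_top
    induction hd using Algebra.adjoin_induction with
    | mem s hs => exact hP s hs
    | algebraMap c => exact fun m hm => (algebraMap_smul A c m).symm ▸ P.smul_mem c hm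
    | add d e _ _ hd he => exact fun m hm => (add_smul d e m).symm ▸ P.add_mem (hd m hm) (he m hm)
    | mul d e _ _ hd he => exact fun m hm => (mul_smul d e m).symm ▸ hd _ (he m hm)
  refine eq_top_iff.mpr fun m _ => ?_
  obtain ⟨d, rfl⟩ := Submodule.mem_span_singleton.mp (hw ▸ Submodule.mem_top : m ∈ _)
  exact stable d w hwP

theorem isSimpleModule_of_polynomialOrbit_surjective {F A M : Type*} [Field F]
    [CharZero F] [Ring A] [Algebra F A] [AddCommGroup M] [Module F M] [Module A M]
    [IsScalarTower F A M] {z v : A} {w : M} {r b : F}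
    (hr : r ≠ 0) (hb : b ≠ 0) (hvz : SemiconjBy v z (z + algebraMap F A r))
    (hvw : v • w = b • w) (hw : w ≠ 0)
    (h_surj : Function.Surjective (polynomialOrbit z w : F[X] →ₗ[F] M)) :
    IsSimpleModule A M := by
  have : Nontrivial M := ⟨w, 0, hw⟩
  refine { eq_bot_or_eq_top := fun N => or_iff_not_imp_left.mpr fun hN => ?_ }
  let N' : Submodule F F[X] := (N.restrictScalars F).comap (polynomialOrbit z w)
  have hN' : N' ≠ ⊥ := by
    obtain ⟨m, hm, hm0⟩ := N.ne_bot_iff.mp hN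
    obtain ⟨p, rfl⟩ := h_surj m
    exact N'.ne_bot_iff.mpr ⟨p, hm, fun hp => hm0 (by rw [hp, map_zero])⟩
  have taylor_mem (p : F[X]) (hp : p ∈ N') : taylor r p ∈ N' := by
    have h_smul : b • taylor r p ∈ N' := by
      change polynomialOrbit z w (b • taylor r p) ∈ N
      rw [← smul_polynomialOrbit hvz hvw]
      exact N.smul_mem v hp
    exact (N'.smul_mem_iff hb).mp h_smul
  have hwN : w ∈ N := by
    have h_one : polynomialOrbit z w (1 : F[X]) ∈ N := one_mem_of_taylor_mem hr hN' taylor_mem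
    rwa [polynomialOrbit_one] at h_one
  refine eq_top_iff.mpr fun m _ => ?_
  obtain ⟨p, rfl⟩ := h_surj m
  exact N.smul_mem _ hwN

end PolynomialOrbit

theorem one_notMem_span_of_apply_eq_zero {R A M : Type*} [Semiring R] [Semiring A]
    [AddCommMonoid M] [Module R M] (ρ : A →+* Module.End R M) {w : M} (hw : w ≠ 0) {S : Set A}
    (hS : ∀ s ∈ S, ρ s w = 0) : (1 : A) ∉ Submodule.span A S := by
  have annihilates (d : A) (hd : d ∈ Submodule.span A S) : ρ d w = 0 := by
    induction hd using Submodule.span_induction with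
    | mem s hs => exact hS s hs
    | zero => simp
    | add d e _ _ hd he => simp [hd, he]
    | smul c d _ hd => simp [hd]
  intro h_one
  exact hw (by simpa using annihilates 1 h_one)

section DualRepresentation

variable (K : Type) [Field K]

/-- Linear functionals on the right `D`-module `D / (yD + ζD)`, given by their values at the
PBW monomials `vⁿ xⁱ gʲ uᵐ` (arguments in the order `n i j m`). -/
abbrev PBWDual : Type := ℕ → ℕ → ℤ → ℕ → K

variable {K} in
/-- The left action `(s • φ)(r) = φ(r s)` of a generator `s` of `D` on functionals. The formulas are
read off from right multiplication by `s` on monomials; for instance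
`vⁿ y = -(n(n-1)/2) vⁿ⁻¹ g` modulo `yD + ζD`. Whenever one of the truncated differences `i - 1`,
`m - 1`, `n - 1` takes its junk value, its coefficient vanishes. -/
noncomputable def generatorAction (φ : PBWDual K) : JGen → PBWDual K
  | .x => fun n i j m => φ n (i + 1) j m
  | .g => fun n i j m => φ n i (j + 1) m
  | .ginv => fun n i j m => φ n i (j - 1) m
  | .u => fun n i j m => φ n i j (m + 1)
  | .zeta => fun n i j m => (n - i + m) * φ n i j m
  | .v => fun n i j m => φ (n + 1) i j m - i * (φ n (i - 1) j m - φ n (i - 1) (j + 1) m)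
      - (i + j - m / 2) * φ n i j (m + 1)
  | .y => fun n i j m => (i / 2 + j) * φ n (i + 1) j m
      - m * (φ n i (j + 1) (m - 1) - φ n i j (m - 1))
      - n * (n - 1) / 2 * φ (n - 1) i (j + 1) m

/-- `generatorAction` as a linear endomorphism of the space of functionals. -/
noncomputable def generatorEnd (s : JGen) : Module.End K (PBWDual K) where
  toFun φ := generatorAction φ s
  map_add' φ ψ := by cases s <;> funext n i j m <;> simp [generatorAction] <;> ring
  map_smul' c φ := by cases s <;> funext n i j m <;> simp [generatorAction] <;> ring

theorem generatorEnd_apply (s : JGen) (φ : PBWDual K) :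
    generatorEnd K s φ = generatorAction φ s := rfl

theorem lift_generatorEnd_eq_of_JRel [CharZero K] {p q : FreeAlgebra K JGen} (h : JRel K p q) :
    lift K (generatorEnd K) p = lift K (generatorEnd K) q := by
  cases h <;>
  · simp only [map_mul, map_add, map_sub, map_one, map_smul, lift_ι_apply]
    ext φ n i j m
    rcases n with _ | n <;> rcases i with _ | i <;> rcases m with _ | m <;>
    · simp only [Module.End.mul_apply, Module.End.one_apply, LinearMap.add_apply,
        LinearMap.sub_apply, LinearMap.smul_apply, Pi.add_apply, Pi.sub_apply, Pi.smul_apply,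
        smul_eq_mul, generatorEnd_apply, generatorAction, add_tsub_cancel_right,
        add_sub_cancel_right, sub_add_cancel, sub_add_eq_add_sub, Int.cast_add, Int.cast_one,
        Nat.cast_add, Nat.cast_one, Nat.cast_zero]
      try ring

/-- The representation of `D` dual to the right module `D / (yD + ζD)`. -/
noncomputable def dualRep [CharZero K] : D K →ₐ[K] Module.End K (PBWDual K) :=
  RingQuot.liftAlgHom K
    ⟨lift K (generatorEnd K), fun _ _ => lift_generatorEnd_eq_of_JRel K⟩

theorem dualRep_Dmk_ι [CharZero K] (s : JGen) (φ : PBWDual K) :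
    dualRep K (Dmk K (ι K s)) φ = generatorAction φ s := by
  have dualRep_Dmk (p : FreeAlgebra K JGen) : dualRep K (Dmk K p) = lift K (generatorEnd K) p :=
    RingQuot.liftAlgHom_mkAlgHom_apply K (lift K (generatorEnd K))
      (fun _ _ => lift_generatorEnd_eq_of_JRel K) p
  rw [dualRep_Dmk, lift_ι_apply, generatorEnd_apply]

end DualRepresentation

section EigenFunctional

variable {K : Type} [Field K] (a b : K)

/-- The value at `vⁿ xⁱ` of the functional `eigenFunctional a b`; the recursion is the equation
`v • φ = b φ` solved for the value at `vⁿ⁺¹ xⁱ`. -/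
def eigenCoeff : ℕ → ℕ → K
  | 0, _ => 1
  | n + 1, i => b * eigenCoeff n i + i * (1 - a) * eigenCoeff n (i - 1)

/-- A common eigenvector of `g`, `v`, `u` in the dual representation, with eigenvalues
`a`, `b`, `0`. -/
def eigenFunctional : PBWDual K :=
  fun n i j m => if m = 0 then a ^ j * eigenCoeff a b n i else 0

theorem eigenFunctional_ne_zero : eigenFunctional a b ≠ 0 := fun h => by
  have h_one : eigenFunctional a b 0 0 0 0 = 0 := by rw [h]; rfl
  simp [eigenFunctional, eigenCoeff] at h_one

theorem generatorAction_g_eigenFunctional {a : K} (ha : a ≠ 0) (b : K) :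
    generatorAction (eigenFunctional a b) .g = a • eigenFunctional a b := by
  funext n i j m
  simp only [generatorAction, eigenFunctional, zpow_add_one₀ ha, Pi.smul_apply, smul_eq_mul]
  split_ifs <;> ring

theorem generatorAction_u_eigenFunctional :
    generatorAction (eigenFunctional a b) .u = 0 := by
  funext n i j m
  simp [generatorAction, eigenFunctional]

theorem generatorAction_v_eigenFunctional {a : K} (ha : a ≠ 0) (b : K) :
    generatorAction (eigenFunctional a b) .v = b • eigenFunctional a b := by
  funext n i j m
  simp only [generatorAction, eigenFunctional, eigenCoeff, zpow_add_one₀ ha, Pi.smul_apply,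
    smul_eq_mul, Nat.succ_ne_zero, if_false]
  split_ifs <;> ring

theorem one_notMem_WIdeal [CharZero K] {a : K} (ha : a ≠ 0) (b : K) :
    (1 : Dgeq K) ∉ WIdeal K a b := by
  refine one_notMem_span_of_apply_eq_zero (R := K) ((dualRep K).comp (Dgeq K).val).toRingHom
    (eigenFunctional_ne_zero a b) ?_
  rintro s (rfl | rfl | rfl)
  · simp [sG, DG, dualRep_Dmk_ι, generatorAction_g_eigenFunctional ha]
  · simp [sV, DV, dualRep_Dmk_ι, generatorAction_v_eigenFunctional ha]
  · simp [sU, DU, dualRep_Dmk_ι, generatorAction_u_eigenFunctional]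

end EigenFunctional

section PositivePart

variable (K : Type) [Field K]

theorem Dmk_eq_of_JRel {p q : FreeAlgebra K JGen} (h : JRel K p q) : Dmk K p = Dmk K q :=
  RingQuot.mkAlgHom_rel K h

theorem adjoin_generators_Dgeq_eq_top :
    Algebra.adjoin K ({sG K, sGinv K, sZ K, sU K, sV K} : Set (Dgeq K)) = ⊤ := by
  refine (congrArg _ ?_).trans (Algebra.adjoin_adjoin_coe_preimage (R := K)
    (s := {DG K, DGinv K, DZ K, DU K, DV K}))
  ext d
  simp only [Set.mem_insert_iff, Set.mem_singleton_iff, Subtype.ext_iff]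
  rfl

/-- The group-like generator `g` as a unit of `D^{≥0}`. -/
noncomputable def gUnit : (Dgeq K)ˣ where
  val := sG K
  inv := sGinv K
  val_inv := Subtype.ext (by simpa using! Dmk_eq_of_JRel K .gginv)
  inv_val := Subtype.ext (by simpa using! Dmk_eq_of_JRel K .ginvg)

theorem commute_gUnit_sZ : Commute (gUnit K : Dgeq K) (sZ K) :=
  Subtype.ext (by simpa using! (Dmk_eq_of_JRel K .zg).symm)

theorem semiconjBy_sU_sZ : SemiconjBy (sU K) (sZ K) (sZ K + 1) :=
  Subtype.ext (by simpa [add_mul] using! Dmk_eq_of_JRel K .uz)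

theorem semiconjBy_sV_sZ : SemiconjBy (sV K) (sZ K) (sZ K + 1) :=
  Subtype.ext (by simpa [add_mul] using! Dmk_eq_of_JRel K .vz)

end PositivePart

section InducedModule

open Polynomial

variable {K : Type} [Field K] (a b : K)

theorem smul_wmk_one (d : Dgeq K) : d • wmk K a b 1 = wmk K a b d := by
  rw [wmk, ← Submodule.Quotient.mk_smul, smul_eq_mul, mul_one]

theorem span_wmk_one : Submodule.span (Dgeq K) {wmk K a b 1} = ⊤ := by
  refine eq_top_iff.mpr fun x _ => Submodule.mem_span_singleton.mpr ?_
  obtain ⟨d, rfl⟩ := Submodule.Quotient.mk_surjective _ x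
  exact ⟨d, smul_wmk_one a b d⟩

theorem smul_wmk_one_eq_of_sub_mem {d : Dgeq K} {c : K}
    (h : d - algebraMap K (Dgeq K) c ∈ WIdeal K a b) : d • wmk K a b 1 = c • wmk K a b 1 := by
  rw [← algebraMap_smul (Dgeq K) c, smul_wmk_one, smul_wmk_one]
  exact (Submodule.Quotient.eq _).mpr h

theorem gUnit_smul_wmk_one : (gUnit K : Dgeq K) • wmk K a b 1 = a • wmk K a b 1 :=
  smul_wmk_one_eq_of_sub_mem a b (Submodule.subset_span (.inl rfl))

theorem gUnit_inv_smul_wmk_one {a : K} (ha : a ≠ 0) (b : K) :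
    (↑(gUnit K)⁻¹ : Dgeq K) • wmk K a b 1 = a⁻¹ • wmk K a b 1 := by
  rw [eq_inv_smul_iff₀ ha, ← smul_algebra_smul_comm, ← gUnit_smul_wmk_one, ← mul_smul,
    Units.inv_mul, one_smul]

theorem sV_smul_wmk_one : sV K • wmk K a b 1 = b • wmk K a b 1 :=
  smul_wmk_one_eq_of_sub_mem a b (Submodule.subset_span (.inr (.inl rfl)))

theorem sU_smul_wmk_one : sU K • wmk K a b 1 = (0 : K) • wmk K a b 1 :=
  smul_wmk_one_eq_of_sub_mem a b
    (by simpa using! Submodule.subset_span (R := Dgeq K) (.inr (.inr rfl)))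

theorem wmk_one_ne_zero [CharZero K] {a : K} (ha : a ≠ 0) (b : K) : wmk K a b 1 ≠ 0 :=
  fun h => one_notMem_WIdeal ha b ((Submodule.Quotient.mk_eq_zero _).mp h)

theorem polynomialOrbit_sZ_surjective {a : K} (ha : a ≠ 0) (b : K) :
    Function.Surjective (polynomialOrbit (sZ K) (wmk K a b 1) : K[X] →ₗ[K] Wmod K a b) := by
  refine LinearMap.range_eq_top.mp (eq_top_of_adjoin_eq_top (adjoin_generators_Dgeq_eq_top K)
    (span_wmk_one a b) ⟨1, polynomialOrbit_one _ _⟩ ?_)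
  rintro s (rfl | rfl | rfl | rfl | rfl) _ ⟨p, rfl⟩
  · exact ⟨_, (smul_polynomialOrbit (r := 0) (by simpa using! commute_gUnit_sZ K)
      (gUnit_smul_wmk_one a b) p).symm⟩
  · exact ⟨_, (smul_polynomialOrbit (r := 0) (by simpa using! (commute_gUnit_sZ K).units_inv_left)
      (gUnit_inv_smul_wmk_one ha b) p).symm⟩
  · exact ⟨_, (smul_polynomialOrbit_self _ _ p).symm⟩
  · exact ⟨_, (smul_polynomialOrbit (r := 1) (by simpa using semiconjBy_sU_sZ K)
      (sU_smul_wmk_one a b) p).symm⟩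
  · exact ⟨_, (smul_polynomialOrbit (r := 1) (by simpa using semiconjBy_sV_sZ K)
      (sV_smul_wmk_one a b) p).symm⟩

end InducedModule

theorem Wab_simple_general {K : Type} [Field K] [CharZero K] {a b : K} (ha : a ≠ 0) (hb : b ≠ 0) :
    IsSimpleModule (Dgeq K) (Wmod K a b) :=
  isSimpleModule_of_polynomialOrbit_surjective one_ne_zero hb
    (by simpa using semiconjBy_sV_sZ K) (sV_smul_wmk_one a b) (wmk_one_ne_zero ha b)
    (polynomialOrbit_sZ_surjective ha b)

/-- if `b ≠ 0`, then `W_{a,b}` is a simple `D^{≥0}`-module for every `a ∈ k^×`. -/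
theorem Wab_simple (a b : k) (ha : a ≠ 0) (hb : b ≠ 0) :
    IsSimpleModule (Dgeq k) (Wmod k a b) :=
  Wab_simple_general ha hb
end
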